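/- arXiv:1410.0428 — 2 statements merged into one kernel-verified Lean document; each statement's English description precedes it below -/
import Mathlib

section
/- Let X and Y be compact metric spaces and N a natural number. Then the Hausdorff distance between their order-N distance matrix sets satisfies d_H(K_N(X), K_N(Y)) ≤ 2 · d_GH(X, Y), where d_H is taken with respect to the ℓ∞ metric on symmetric N×N matrices. -/
/-- The set of distance matrices of order `N` of a metric space `X`:
all matrices `(d_X(x_i, x_j))_{i,j}` for `N`-tuples of points of `X`,
viewed inside `Fin N → Fin N → ℝ` with the sup (`ℓ∞`) metric. -/
def distMatrixSet (X : Type*) [MetricSpace X] (N : ℕ) : Set (Fin N → Fin N → ℝ) :=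
  { M | ∃ x : Fin N → X, M = fun i j => dist (x i) (x j) }

/-- for compact metric spaces `X`, `Y` and any `N`,
`d_H(K_N(X), K_N(Y)) ≤ 2 d_GH(X, Y)`, where the Hausdorff distance is taken with
respect to the `ℓ∞` metric on symmetric `N × N` matrices. -/
theorem hausdorffDist_distMatrixSet_le_two_ghDist (X Y : Type*)
    [MetricSpace X] [CompactSpace X] [Nonempty X]
    [MetricSpace Y] [CompactSpace Y] [Nonempty Y] (N : ℕ) :
    Metric.hausdorffDist (distMatrixSet X N) (distMatrixSet Y N) ≤
      2 * GromovHausdorff.ghDist X Y := by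
  obtain ⟨Φ, Ψ, hΦ, hΨ, hH⟩ := GromovHausdorff.ghDist_eq_hausdorffDist X Y
  have fin : Metric.hausdorffEDist (Set.range Φ) (Set.range Ψ) ≠ ⊤ :=
    Metric.hausdorffEDist_ne_top_of_nonempty_of_bounded (Set.range_nonempty _)
      (Set.range_nonempty _) (isCompact_range hΦ.continuous).isBounded
      (isCompact_range hΨ.continuous).isBounded
  have h0 : 0 ≤ GromovHausdorff.ghDist X Y := by
    rw [hH]
    exact Metric.hausdorffDist_nonneg
  refine le_of_forall_pos_le_add fun ε hε => ?_
  have hlt : Metric.hausdorffDist (Set.range Φ) (Set.range Ψ) <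
      GromovHausdorff.ghDist X Y + ε / 2 := by
    rw [hH]
    linarith
  have key : ∀ x x' : X, ∀ y y' : Y,
      dist (Φ x) (Ψ y) < GromovHausdorff.ghDist X Y + ε / 2 →
      dist (Φ x') (Ψ y') < GromovHausdorff.ghDist X Y + ε / 2 →
      dist (dist x x') (dist y y') ≤ 2 * GromovHausdorff.ghDist X Y + ε := by
    intro x x' y y' h h'
    rw [← hΦ.dist_eq, ← hΨ.dist_eq]
    have := dist_dist_dist_le (Φ x) (Φ x') (Ψ y) (Ψ y')
    linarith
  refine Metric.hausdorffDist_le_of_mem_dist (by linarith) ?_ ?_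
  · rintro _ ⟨x, rfl⟩
    have hex : ∀ i, ∃ y : Y, dist (Φ (x i)) (Ψ y) < GromovHausdorff.ghDist X Y + ε / 2 := by
      intro i
      obtain ⟨_, ⟨y, rfl⟩, hy⟩ :=
        Metric.exists_dist_lt_of_hausdorffDist_lt (Set.mem_range_self (x i)) hlt fin
      exact ⟨y, hy⟩
    choose y hy using hex
    refine ⟨_, ⟨y, rfl⟩, ?_⟩
    refine (dist_pi_le_iff (by linarith)).2 fun i => (dist_pi_le_iff (by linarith)).2 fun j => ?_
    exact key _ _ _ _ (hy i) (hy j)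
  · rintro _ ⟨y, rfl⟩
    have hex : ∀ i, ∃ x : X, dist (Φ x) (Ψ (y i)) < GromovHausdorff.ghDist X Y + ε / 2 := by
      intro i
      obtain ⟨_, ⟨x, rfl⟩, hx⟩ :=
        Metric.exists_dist_lt_of_hausdorffDist_lt' (Set.mem_range_self (y i)) hlt fin
      exact ⟨x, hx⟩
    choose x hx using hex
    refine ⟨_, ⟨x, rfl⟩, ?_⟩
    refine (dist_pi_le_iff (by linarith)).2 fun i => (dist_pi_le_iff (by linarith)).2 fun j => ?_
    rw [dist_comm]
    exact key _ _ _ _ (hx i) (hx j)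
end

section
/- Let X be a complete separable metric space. For any two Borel probability measures μ and ν on X, (1/2)·□((X,μ),(X,ν)) ≤ □((2⁻¹X, μ),(2⁻¹X, ν)) ≤ d_P(μ, ν), where 2⁻¹X denotes X with its metric halved. -/
open MeasureTheory
open scoped ENNReal

/-- The parameter interval `I = [0, 1)`. -/
abbrev unitI : Set ℝ := Set.Ico (0 : ℝ) 1

/-- The Lebesgue measure on the subtype `I = [0, 1)`. -/
noncomputable def lebI : Measure unitI := Measure.comap Subtype.val volume

/-- A parameter of an mm-space `(X, μ)`: a Borel map `φ : I → X` pushing the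
Lebesgue measure of `I = [0,1)` forward to `μ`. -/
def IsParameter {X : Type*} [MeasurableSpace X] (φ : unitI → X) (μ : Measure X) : Prop :=
  Measurable φ ∧ Measure.map φ lebI = μ

/-- The box distance `□(ρ₁, ρ₂)` between two pseudo-metrics on `I`:
the infimum of `ε ≥ 0` admitting a Borel `I₀ ⊆ I` with `L¹(I₀) ≥ 1 − ε` and
`|ρ₁(s,t) − ρ₂(s,t)| ≤ ε` on `I₀ × I₀`. -/
noncomputable def boxDistP (ρ₁ ρ₂ : unitI → unitI → ℝ) : ℝ :=
  sInf {ε : ℝ | 0 ≤ ε ∧ ∃ I₀ : Set unitI, MeasurableSet I₀ ∧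
    ENNReal.ofReal (1 - ε) ≤ lebI I₀ ∧
    ∀ s ∈ I₀, ∀ t ∈ I₀, |ρ₁ s t - ρ₂ s t| ≤ ε}

/-- The box distance between two mm-spaces (metrics given explicitly):
the infimum of `□(φ*d_X, ψ*d_Y)` over all parameters `φ`, `ψ`. -/
noncomputable def boxDist {X Y : Type*} [MeasurableSpace X] [MeasurableSpace Y]
    (mX : MetricSpace X) (mY : MetricSpace Y) (μ : Measure X) (ν : Measure Y) : ℝ :=
  letI := mX
  letI := mY
  sInf { r : ℝ | ∃ φ : unitI → X, ∃ ψ : unitI → Y,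
    IsParameter φ μ ∧ IsParameter ψ ν ∧
    r = boxDistP (fun s t => dist (φ s) (φ t)) (fun s t => dist (ψ s) (ψ t)) }

/-- The Prohorov distance between Borel probability measures on `X`. -/
noncomputable def prohorovDist {X : Type*} [PseudoMetricSpace X] [MeasurableSpace X]
    (μ ν : Measure X) : ℝ :=
  sInf {ε : ℝ | 0 < ε ∧ ∀ A : Set X, MeasurableSet A →
    ν A ≤ μ (Metric.thickening ε A) + ENNReal.ofReal ε}

/-- The metric space `tX`: same carrier, metric multiplied by `t > 0`. -/
noncomputable def scaleMetric {X : Type*} (m : MetricSpace X) (t : ℝ) (ht : 0 < t) :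
    MetricSpace X :=
  letI := m
  { dist := fun x y => t * dist x y
    dist_self := fun x => by simp
    dist_comm := fun x y => by simp [dist_comm]
    dist_triangle := fun x y z => by
      have h := dist_triangle x y z
      calc t * dist x z ≤ t * (dist x y + dist y z) :=
            mul_le_mul_of_nonneg_left h ht.le
        _ = t * dist x y + t * dist y z := mul_add t _ _
    eq_of_dist_eq_zero := by
      intro x y hxy
      rcases mul_eq_zero.mp hxy with h' | h'
      · exact absurd h' (ne_of_gt ht)
      · exact eq_of_dist_eq_zero h' }

theorem exists_parameter {Z : Type*} [MeasurableSpace Z] [StandardBorelSpace Z]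
    (π : Measure Z) [IsProbabilityMeasure π] :
    ∃ f : unitI → Z, Measurable f ∧ Measure.map f lebI = π := by
  have : Nonempty Z := nonempty_of_isProbabilityMeasure π
  obtain ⟨f, hf, hfm⟩ := π.exists_measurable_map_eq
  have hg : Measurable (fun s : unitI => (⟨s.1, s.2.1, s.2.2.le⟩ : unitInterval)) :=
    Measurable.subtype_mk measurable_subtype_coe
  refine ⟨fun s => f ⟨s.1, s.2.1, s.2.2.le⟩, hf.comp hg, ?_⟩
  have h1 : Measure.map (fun s : unitI => (⟨s.1, s.2.1, s.2.2.le⟩ : unitInterval)) lebI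
      = volume := by
    ext s hs
    rw [Measure.map_apply hg hs, lebI,
      (MeasurableEmbedding.subtype_coe measurableSet_Ico).comap_apply,
      unitInterval.volume_apply]
    refine measure_congr ?_
    have h2 : ∀ᵐ x : ℝ, x ≠ 1 := by simp [ae_iff]
    filter_upwards [h2] with x hx
    apply propext
    constructor
    · rintro ⟨y, hy, rfl⟩
      exact ⟨_, hy, rfl⟩
    · rintro ⟨y, hy, rfl⟩
      exact ⟨⟨y.1, y.2.1, lt_of_le_of_ne y.2.2 hx⟩, hy, rfl⟩
  rw [← hfm, ← h1, Measure.map_map hf hg]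
  rfl

instance : IsProbabilityMeasure lebI := by
  constructor
  rw [lebI, (MeasurableEmbedding.subtype_coe measurableSet_Ico).comap_apply,
    Subtype.coe_image_univ, Real.volume_Ico]
  simp

theorem exists_coupling_of_sub {X : Type*} [MeasurableSpace X] (μ ν : Measure X)
    [IsProbabilityMeasure μ] [IsProbabilityMeasure ν] (π₁ : Measure (X × X))
    (h1 : π₁.map Prod.fst ≤ μ) (h2 : π₁.map Prod.snd ≤ ν) :
    ∃ π : Measure (X × X), π₁ ≤ π ∧ π.map Prod.fst = μ ∧ π.map Prod.snd = ν := by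
  have e1 : π₁.map Prod.fst Set.univ = π₁ Set.univ := by
    rw [Measure.map_apply measurable_fst .univ]; simp
  have e2 : π₁.map Prod.snd Set.univ = π₁ Set.univ := by
    rw [Measure.map_apply measurable_snd .univ]; simp
  have hle : π₁ Set.univ ≤ 1 := by
    rw [← e1, ← measure_univ (μ := μ)]; exact h1 _
  have : IsFiniteMeasure π₁ := ⟨hle.trans_lt ENNReal.one_lt_top⟩
  set α := μ - π₁.map Prod.fst with hα
  set β := ν - π₁.map Prod.snd with hβ
  set r := 1 - π₁ Set.univ with hr
  have a1 : α Set.univ = r := by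
    rw [hα, Measure.sub_apply .univ h1, e1, measure_univ]
  have b1 : β Set.univ = r := by
    rw [hβ, Measure.sub_apply .univ h2, e2, measure_univ]
  have hrt : r ≠ ⊤ := by rw [hr]; exact ENNReal.sub_ne_top ENNReal.one_ne_top
  have hα' : α + π₁.map Prod.fst = μ := Measure.sub_add_cancel_of_le h1
  have hβ' : β + π₁.map Prod.snd = ν := Measure.sub_add_cancel_of_le h2
  refine ⟨π₁ + r⁻¹ • α.prod β, Measure.le_add_right le_rfl, ?_, ?_⟩
  · rw [Measure.map_add _ _ measurable_fst, Measure.map_smul, Measure.map_fst_prod, b1, smul_smul,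
      add_comm]
    by_cases h0 : r = 0
    · have : α = 0 := by rw [← Measure.measure_univ_eq_zero, a1, h0]
      rw [this] at hα' ⊢; simpa using hα'
    · rw [ENNReal.inv_mul_cancel h0 hrt, one_smul, hα']
  · rw [Measure.map_add _ _ measurable_snd, Measure.map_smul, Measure.map_snd_prod, a1, smul_smul,
      add_comm]
    by_cases h0 : r = 0
    · have : β = 0 := by rw [← Measure.measure_univ_eq_zero, b1, h0]
      rw [this] at hβ' ⊢; simpa using hβ'
    · rw [ENNReal.inv_mul_cancel h0 hrt, one_smul, hβ']

open Classical in
theorem hall_transport {n M : ℕ} (p q : Fin n → ℕ) (R : Fin n → Fin n → Prop)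
    (H : ∀ J : Finset (Fin n), ∑ j ∈ J, q j ≤
      ∑ i ∈ Finset.univ.filter (fun i => ∃ j ∈ J, R j i), p i + M) :
    ∃ w : Fin n → Fin n → ℕ, (∀ j i, w j i ≠ 0 → R j i) ∧ (∀ j, ∑ i, w j i ≤ q j) ∧
      (∀ i, ∑ j, w j i ≤ p i) ∧ ∑ j, q j ≤ ∑ j, ∑ i, w j i + M := by
  let K := Σ j : Fin n, Fin (q j)
  let L := Σ i : Fin n, Fin (p i)
  let N : K → Finset (L ⊕ Fin M) := fun k =>
    (Finset.univ.filter (fun l : L => R k.1 l.1)).disjSum Finset.univ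
  have hall : ∀ S : Finset K, S.card ≤ (S.biUnion N).card := by
    intro S
    rcases S.eq_empty_or_nonempty with rfl | ⟨k0, hk0⟩
    · simp
    have h1 : S ⊆ (S.image Sigma.fst).sigma (fun _ => Finset.univ) := by
      intro k hk
      exact Finset.mem_sigma.2 ⟨Finset.mem_image_of_mem _ hk, Finset.mem_univ _⟩
    have h2 := Finset.card_le_card h1
    rw [Finset.card_sigma] at h2
    simp only [Finset.card_univ, Fintype.card_fin] at h2
    have h3 : ((Finset.univ.filter (fun i => ∃ j ∈ S.image Sigma.fst, R j i)).sigma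
        (fun i => (Finset.univ : Finset (Fin (p i))))).disjSum (Finset.univ : Finset (Fin M))
        ⊆ S.biUnion N := by
      intro x hx
      rw [Finset.mem_disjSum] at hx
      rw [Finset.mem_biUnion]
      rcases hx with ⟨l, hl, rfl⟩ | ⟨m, -, rfl⟩
      · have hl := (Finset.mem_sigma.1 hl).1
        simp only [Finset.mem_filter, Finset.mem_univ, true_and, Finset.mem_image] at hl
        obtain ⟨j, ⟨k, hk, rfl⟩, hR⟩ := hl
        exact ⟨k, hk, by simp [N, hR]⟩
      · exact ⟨k0, hk0, by simp [N]⟩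
    have h4 := Finset.card_le_card h3
    rw [Finset.card_disjSum, Finset.card_sigma] at h4
    simp only [Finset.card_univ, Fintype.card_fin] at h4
    exact h2.trans ((H _).trans h4)
  obtain ⟨f, finj, hf⟩ := (Finset.all_card_le_biUnion_card_iff_exists_injective N).1 hall
  let A : Fin n → Fin n → Finset K := fun j i =>
    Finset.univ.filter (fun k => k.1 = j ∧ ∃ l : L, l.1 = i ∧ f k = Sum.inl l)
  have hAmem : ∀ j i k, k ∈ A j i ↔ k.1 = j ∧ ∃ l : L, l.1 = i ∧ f k = Sum.inl l := by
    intro j i k; simp [A]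
  have hAi : ∀ j i i' k, k ∈ A j i → k ∈ A j i' → i = i' := by
    intro j i i' k h h'
    rw [hAmem] at h h'
    obtain ⟨-, l, rfl, hl⟩ := h
    obtain ⟨-, l', rfl, hl'⟩ := h'
    rw [hl] at hl'
    rw [Sum.inl.inj hl']
  have hrow : ∀ j, ∑ i, (A j i).card = (Finset.univ.biUnion (A j)).card := by
    intro j
    rw [Finset.card_biUnion]
    intro i _ i' _ hii
    rw [Function.onFun, Finset.disjoint_left]
    exact fun k h h' => hii (hAi j i i' k h h')
  refine ⟨fun j i => (A j i).card, ?_, ?_, ?_, ?_⟩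
  · intro j i h
    obtain ⟨k, hk⟩ := Finset.card_ne_zero.1 h
    rw [hAmem] at hk
    obtain ⟨rfl, l, rfl, hl⟩ := hk
    have := hf k
    rw [hl] at this
    simpa [N] using this
  · intro j
    rw [hrow]
    have : Finset.univ.biUnion (A j) ⊆ ({j} : Finset (Fin n)).sigma (fun _ => Finset.univ) := by
      intro k hk
      rw [Finset.mem_biUnion] at hk
      obtain ⟨i, -, hk⟩ := hk
      rw [hAmem] at hk
      exact Finset.mem_sigma.2 ⟨Finset.mem_singleton.2 hk.1, Finset.mem_univ _⟩
    have := Finset.card_le_card this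
    rw [Finset.card_sigma] at this
    simpa using this
  · intro i
    rw [← Finset.card_biUnion]
    · have hs : (Finset.univ.biUnion fun j => A j i).image f ⊆
          (({i} : Finset (Fin n)).sigma (fun i => (Finset.univ : Finset (Fin (p i))))).image
            Sum.inl := by
        intro x hx
        rw [Finset.mem_image] at hx
        obtain ⟨k, hk, rfl⟩ := hx
        rw [Finset.mem_biUnion] at hk
        obtain ⟨j, -, hk⟩ := hk
        rw [hAmem] at hk
        obtain ⟨-, l, rfl, hl⟩ := hk
        rw [hl]
        apply Finset.mem_image_of_mem
        exact Finset.mem_sigma.2 ⟨Finset.mem_singleton.2 rfl, Finset.mem_univ _⟩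
      have := Finset.card_le_card hs
      rw [Finset.card_image_of_injective _ finj,
        Finset.card_image_of_injective _ Sum.inl_injective, Finset.card_sigma] at this
      simpa using this
    · intro j _ j' _ hjj
      rw [Function.onFun, Finset.disjoint_left]
      intro k h h'
      rw [hAmem] at h h'
      exact hjj (h.1.symm.trans h'.1)
  · simp only [hrow]
    rw [← Finset.card_biUnion]
    · have hs : (Finset.univ : Finset K).image f ⊆
          ((Finset.univ.biUnion fun j => Finset.univ.biUnion (A j)).image f) ∪
            (Finset.univ : Finset (Fin M)).image Sum.inr := by
        intro x hx
        rw [Finset.mem_image] at hx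
        obtain ⟨k, -, rfl⟩ := hx
        rw [Finset.mem_union]
        rcases hfk : f k with l | m
        · left
          rw [← hfk]
          apply Finset.mem_image_of_mem
          simp only [Finset.mem_biUnion, Finset.mem_univ, true_and]
          exact ⟨k.1, l.1, (hAmem _ _ _).2 ⟨rfl, l, rfl, hfk⟩⟩
        · right; simp
      have h1 := (Finset.card_le_card hs).trans (Finset.card_union_le _ _)
      rw [Finset.card_image_of_injective _ finj, Finset.card_image_of_injective _ finj,
        Finset.card_image_of_injective _ Sum.inr_injective] at h1
      simpa [K] using h1
    · intro j _ j' _ hjj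
      rw [Function.onFun, Finset.disjoint_left]
      intro k h h'
      simp only [Finset.mem_biUnion, Finset.mem_univ, true_and, hAmem] at h h'
      obtain ⟨_, h, -⟩ := h
      obtain ⟨_, h', -⟩ := h'
      exact hjj (h.symm.trans h')

open ProbabilityTheory in
theorem sum_cond_le {X : Type*} [MeasurableSpace X] {n : ℕ} (μ : Measure X)
    [IsProbabilityMeasure μ] (B : Fin n → Set X) (hB : ∀ i, MeasurableSet (B i))
    (hd : Pairwise (fun i j => Disjoint (B i) (B j)))
    (w : Fin n → ℝ≥0∞) (hw : ∀ i, w i ≤ μ (B i)) (s : Set X) (hs : MeasurableSet s) :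
    ∑ i, w i * μ[|B i] s ≤ μ s := by
  calc ∑ i, w i * μ[|B i] s ≤ ∑ i, μ (B i ∩ s) := by
        refine Finset.sum_le_sum fun i _ => ?_
        rw [cond_apply (hB i)]
        by_cases h0 : μ (B i) = 0
        · have : w i = 0 := le_antisymm ((hw i).trans h0.le) zero_le
          simp [this]
        · rw [← mul_assoc]
          calc w i * (μ (B i))⁻¹ * μ (B i ∩ s) ≤ μ (B i) * (μ (B i))⁻¹ * μ (B i ∩ s) := by
                gcongr; exact hw i
            _ = μ (B i ∩ s) := by
                rw [ENNReal.mul_inv_cancel h0 (measure_ne_top _ _), one_mul]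
    _ = μ (⋃ i, B i ∩ s) := by
        rw [measure_iUnion _ (fun i => (hB i).inter hs), tsum_fintype]
        intro i j hij
        exact (hd hij).mono Set.inter_subset_left Set.inter_subset_left
    _ ≤ μ s := measure_mono (Set.iUnion_subset fun i => Set.inter_subset_right)

open ProbabilityTheory in
theorem exists_coupling_of_weights {X : Type*} [MeasurableSpace X] {n : ℕ} (μ ν : Measure X)
    [IsProbabilityMeasure μ] [IsProbabilityMeasure ν]
    (B : Fin n → Set X) (hB : ∀ i, MeasurableSet (B i))
    (hd : Pairwise (fun i j => Disjoint (B i) (B j)))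
    (w : Fin n → Fin n → ℝ≥0∞) (h1 : ∀ i, ∑ j, w j i ≤ μ (B i))
    (h2 : ∀ j, ∑ i, w j i ≤ ν (B j)) (D : Set (X × X))
    (hD : ∀ j i, w j i ≠ 0 → B i ×ˢ B j ⊆ D) :
    ∃ π : Measure (X × X), π.map Prod.fst = μ ∧ π.map Prod.snd = ν ∧
      ∑ j, ∑ i, w j i ≤ π D := by
  have hw1 : ∀ j i, w j i ≠ 0 → μ (B i) ≠ 0 := by
    intro j i h h0
    exact h (le_antisymm (((Finset.single_le_sum (f := fun j => w j i) (fun _ _ => zero_le)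
      (Finset.mem_univ j)).trans (h1 i)).trans h0.le) zero_le)
  have hw2 : ∀ j i, w j i ≠ 0 → ν (B j) ≠ 0 := by
    intro j i h h0
    exact h (le_antisymm (((Finset.single_le_sum (f := fun i => w j i) (fun _ _ => zero_le)
      (Finset.mem_univ i)).trans (h2 j)).trans h0.le) zero_le)
  have hcu : ∀ (κ : Measure X) [IsProbabilityMeasure κ] (C : Set X), κ[|C] Set.univ ≤ 1 := by
    intro κ _ C
    by_cases h0 : κ C = 0
    · simp [cond_eq_zero_of_meas_eq_zero h0]
    · have := cond_isProbabilityMeasure h0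
      simp
  let π₁ : Measure (X × X) := ∑ j, ∑ i, w j i • (μ[|B i]).prod (ν[|B j])
  have hπ : ∀ s, π₁ s = ∑ j, ∑ i, w j i * (μ[|B i]).prod (ν[|B j]) s := by
    intro s
    simp [π₁, Measure.finsetSum_apply]
  obtain ⟨π, hle, hf, hg⟩ := exists_coupling_of_sub μ ν π₁ (by
    refine Measure.le_iff.2 fun s hs => ?_
    rw [Measure.map_apply measurable_fst hs, hπ, Finset.sum_comm]
    refine le_trans ?_ (sum_cond_le μ B hB hd (fun i => ∑ j, w j i) h1 s hs)
    refine Finset.sum_le_sum fun i _ => ?_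
    rw [Finset.sum_mul]
    refine Finset.sum_le_sum fun j _ => ?_
    gcongr
    rw [← Set.prod_univ, Measure.prod_prod]
    exact mul_le_of_le_one_right zero_le (hcu ν _)) (by
    refine Measure.le_iff.2 fun s hs => ?_
    rw [Measure.map_apply measurable_snd hs, hπ]
    refine le_trans ?_ (sum_cond_le ν B hB hd (fun j => ∑ i, w j i) h2 s hs)
    refine Finset.sum_le_sum fun j _ => ?_
    rw [Finset.sum_mul]
    refine Finset.sum_le_sum fun i _ => ?_
    gcongr
    rw [← Set.univ_prod, Measure.prod_prod]
    exact mul_le_of_le_one_left zero_le (hcu μ _))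
  refine ⟨π, hf, hg, le_trans ?_ (hle D)⟩
  rw [hπ]
  refine Finset.sum_le_sum fun j _ => Finset.sum_le_sum fun i _ => ?_
  by_cases h0 : w j i = 0
  · simp [h0]
  calc w j i = w j i * (μ[|B i]).prod (ν[|B j]) (B i ×ˢ B j) := by
        rw [Measure.prod_prod, cond_apply_self (hw1 j i h0) (measure_ne_top _ _),
          cond_apply_self (hw2 j i h0) (measure_ne_top _ _)]
        simp
    _ ≤ _ := by gcongr; exact hD j i h0

theorem strassen_approx {X : Type*} [MetricSpace X]
    [TopologicalSpace.SeparableSpace X] [MeasurableSpace X] [BorelSpace X]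
    (μ ν : Measure X) [IsProbabilityMeasure μ] [IsProbabilityMeasure ν] {ε δ : ℝ} (hε : 0 < ε)
    (hδ : 0 < δ)
    (h : ∀ A : Set X, MeasurableSet A → ν A ≤ μ (Metric.thickening ε A) + ENNReal.ofReal ε) :
    ∃ π : Measure (X × X), π.map Prod.fst = μ ∧ π.map Prod.snd = ν ∧
      ENNReal.ofReal (1 - (ε + 3 * δ)) ≤ π {z | dist z.1 z.2 ≤ ε + 2 * δ} := by
  classical
  obtain ⟨Es, Em, Eb, Ed, Ec, Edj⟩ :=
    SeparableSpace.exists_measurable_partition_diam_le X hδ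
  have key : ∀ κ : Measure X, IsProbabilityMeasure κ →
      ∀ᶠ n in Filter.atTop, 1 - δ < κ.real (⋃ i : Fin n, Es i) := by
    intro κ hκ
    have ht := tendsto_measure_biUnion_Ici_zero_of_pairwise_disjoint (μ := κ)
      (fun n => (Em n).nullMeasurableSet) Edj
    have := ht.eventually (gt_mem_nhds (ENNReal.ofReal_pos.2 hδ))
    filter_upwards [this] with n hn
    have hm : MeasurableSet (⋃ i : Fin n, Es i) := MeasurableSet.iUnion fun i => Em i
    have hsub : (⋃ i : Fin n, Es i)ᶜ ⊆ ⋃ i, ⋃ (_ : i ≥ n), Es i := by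
      intro x hx
      have : x ∈ ⋃ n, Es n := by rw [Ec]; trivial
      obtain ⟨k, hk⟩ := Set.mem_iUnion.1 this
      refine Set.mem_iUnion₂.2 ⟨k, ?_, hk⟩
      by_contra hkn
      exact hx (Set.mem_iUnion.2 ⟨⟨k, not_le.1 hkn⟩, hk⟩)
    have h3 : κ.real (⋃ i : Fin n, Es i)ᶜ < δ := by
      rw [Measure.real, ← ENNReal.lt_ofReal_iff_toReal_lt (measure_ne_top _ _)]
      exact (measure_mono hsub).trans_lt hn
    rw [probReal_compl_eq_one_sub hm] at h3
    linarith
  obtain ⟨n, hnμ, hnν⟩ := ((key μ inferInstance).and (key ν inferInstance)).exists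
  let B : Fin n → Set X := fun i => Es i
  have hB : ∀ i, MeasurableSet (B i) := fun i => Em i
  have hd : Pairwise (fun i j => Disjoint (B i) (B j)) := fun i j hij =>
    Edj (fun h => hij (Fin.ext h))
  have hsum : ∀ κ : Measure X, IsProbabilityMeasure κ → ∀ J : Finset (Fin n),
      κ.real (⋃ j ∈ J, B j) = ∑ j ∈ J, κ.real (B j) := by
    intro κ _ J
    exact measureReal_biUnion_finset (fun i _ j _ hij => hd hij) (fun i _ => hB i)
  have hsumu : ∀ κ : Measure X, IsProbabilityMeasure κ →
      κ.real (⋃ i : Fin n, Es i) = ∑ j, κ.real (B j) := by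
    intro κ hκ
    rw [← hsum κ hκ]
    simp [B]
  obtain ⟨N, hN⟩ := exists_nat_gt ((2 * n + 1) / δ)
  have hN0 : (0 : ℝ) < N := lt_of_le_of_lt (by positivity) hN
  have hNδ : (2 * n + 1 : ℝ) < N * δ := (div_lt_iff₀ hδ).1 hN
  let p : Fin n → ℕ := fun i => ⌊N * μ.real (B i)⌋₊
  let q : Fin n → ℕ := fun i => ⌊N * ν.real (B i)⌋₊
  let M : ℕ := ⌈N * (ε + δ)⌉₊ + n
  let R : Fin n → Fin n → Prop := fun j i => ∃ x ∈ B i, ∃ y ∈ B j, dist x y < ε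
  have hple : ∀ i, (p i : ℝ) ≤ N * μ.real (B i) := fun i => Nat.floor_le (by positivity)
  have hqle : ∀ i, (q i : ℝ) ≤ N * ν.real (B i) := fun i => Nat.floor_le (by positivity)
  have hpge : ∀ i, N * μ.real (B i) ≤ p i + 1 := fun i => (Nat.lt_floor_add_one _).le
  have hqge : ∀ i, N * ν.real (B i) ≤ q i + 1 := fun i => (Nat.lt_floor_add_one _).le
  have hMge : N * (ε + δ) + n ≤ (M : ℝ) := by
    simp only [M]; push_cast; gcongr; exact Nat.le_ceil _
  have hMle : (M : ℝ) ≤ N * (ε + δ) + 1 + n := by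
    simp only [M]; push_cast; gcongr; exact (Nat.ceil_lt_add_one (by positivity)).le
  obtain ⟨w, hwR, hwq, hwp, hwt⟩ := hall_transport (M := M) p q R (by
    intro J
    set T := Finset.univ.filter (fun i => ∃ j ∈ J, R j i) with hT
    have hA : MeasurableSet (⋃ j ∈ J, B j) := J.measurableSet_biUnion fun j _ => hB j
    have e1 : ν.real (⋃ j ∈ J, B j) ≤ μ.real (Metric.thickening ε (⋃ j ∈ J, B j)) + ε := by
      have := ENNReal.toReal_mono (by finiteness) (h _ hA)
      rwa [ENNReal.toReal_add (by finiteness) (by finiteness),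
        ENNReal.toReal_ofReal hε.le] at this
    have hsub : Metric.thickening ε (⋃ j ∈ J, B j) ⊆ (⋃ i ∈ T, B i) ∪ (⋃ i : Fin n, Es i)ᶜ := by
      intro x hx
      by_cases hxu : x ∈ ⋃ i : Fin n, Es i
      · left
        obtain ⟨i, hi⟩ := Set.mem_iUnion.1 hxu
        obtain ⟨y, hy, hxy⟩ := Metric.mem_thickening_iff.1 hx
        obtain ⟨j, hj, hyj⟩ := Set.mem_iUnion₂.1 hy
        refine Set.mem_iUnion₂.2 ⟨i, ?_, hi⟩
        rw [hT, Finset.mem_filter]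
        exact ⟨Finset.mem_univ _, j, hj, x, hi, y, hyj, hxy⟩
      · right; exact hxu
    have e2 : μ.real (Metric.thickening ε (⋃ j ∈ J, B j)) ≤ ∑ i ∈ T, μ.real (B i) + δ := by
      refine (measureReal_mono hsub).trans ((measureReal_union_le _ _).trans ?_)
      rw [hsum μ inferInstance, probReal_compl_eq_one_sub (MeasurableSet.iUnion fun i : Fin n => Em i)]
      linarith
    rw [hsum ν inferInstance] at e1
    have e3 : ((∑ j ∈ J, q j : ℕ) : ℝ) ≤ N * ∑ j ∈ J, ν.real (B j) := by
      push_cast; rw [Finset.mul_sum]; exact Finset.sum_le_sum fun j _ => hqle j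
    have e4 : N * ∑ i ∈ T, μ.real (B i) ≤ ((∑ i ∈ T, p i : ℕ) : ℝ) + n := by
      push_cast; rw [Finset.mul_sum]
      refine (Finset.sum_le_sum fun i _ => hpge i).trans ?_
      rw [Finset.sum_add_distrib]
      have : (T.card : ℝ) ≤ n := by
        exact_mod_cast (Finset.card_le_univ T).trans (by simp)
      simpa using this
    have e5 : (N : ℝ) * ∑ j ∈ J, ν.real (B j) ≤ N * (∑ i ∈ T, μ.real (B i) + δ + ε) := by
      gcongr; linarith
    have : ((∑ j ∈ J, q j : ℕ) : ℝ) ≤ ((∑ i ∈ T, p i + M : ℕ) : ℝ) := by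
      rw [Nat.cast_add]
      linarith
    exact_mod_cast this)
  have hconv : ∀ (κ : Measure X) [IsProbabilityMeasure κ] (i : Fin n) (f : Fin n → ℕ) (a : ℕ),
      ∑ j, f j ≤ a → (a : ℝ) ≤ N * κ.real (B i) →
      ∑ j, ENNReal.ofReal ((f j : ℝ) / N) ≤ κ (B i) := by
    intro κ _ i f a h1 h2
    rw [← ENNReal.ofReal_sum_of_nonneg (fun _ _ => by positivity), ← Finset.sum_div]
    refine ENNReal.ofReal_le_of_le_toReal ?_
    rw [div_le_iff₀ hN0]
    have : ((∑ j, f j : ℕ) : ℝ) ≤ a := by exact_mod_cast h1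
    push_cast at this
    have h3 : κ.real (B i) = (κ (B i)).toReal := rfl
    rw [← h3]
    linarith
  obtain ⟨π, hf, hg, hπ⟩ := exists_coupling_of_weights μ ν B hB hd
    (fun j i => ENNReal.ofReal ((w j i : ℝ) / N))
    (fun i => hconv μ i (fun j => w j i) _ (hwp i) (hple i))
    (fun j => hconv ν j (fun i => w j i) _ (hwq j) (hqle j))
    {z | dist z.1 z.2 ≤ ε + 2 * δ} (by
      intro j i h0
      have : w j i ≠ 0 := by
        intro h1; apply h0; simp [h1]
      obtain ⟨x, hx, y, hy, hxy⟩ := hwR j i this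
      rintro ⟨a, b⟩ ⟨ha, hb⟩
      have h1 : dist a x ≤ δ := (Metric.dist_le_diam_of_mem (Eb i) ha hx).trans (Ed i)
      have h2 : dist y b ≤ δ := (Metric.dist_le_diam_of_mem (Eb j) hy hb).trans (Ed j)
      have h3 := dist_triangle4 a x y b
      simp only [Set.mem_ofPred_eq]
      linarith)
  refine ⟨π, hf, hg, le_trans ?_ hπ⟩
  have e : ∑ j, ∑ i, ENNReal.ofReal ((w j i : ℝ) / N)
      = ENNReal.ofReal (((∑ j, ∑ i, w j i : ℕ) : ℝ) / N) := by
    push_cast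
    rw [Finset.sum_div, ENNReal.ofReal_sum_of_nonneg (fun _ _ => by positivity)]
    refine Finset.sum_congr rfl fun j _ => ?_
    rw [Finset.sum_div, ENNReal.ofReal_sum_of_nonneg (fun _ _ => by positivity)]
  rw [e]
  apply ENNReal.ofReal_le_ofReal
  rw [le_div_iff₀ hN0]
  have f1 : ((∑ j, q j : ℕ) : ℝ) ≤ ((∑ j, ∑ i, w j i : ℕ) : ℝ) + M := by exact_mod_cast hwt
  have f2 : N * ∑ j, ν.real (B j) ≤ ((∑ j, q j : ℕ) : ℝ) + n := by
    push_cast; rw [Finset.mul_sum]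
    refine (Finset.sum_le_sum fun i _ => hqge i).trans ?_
    rw [Finset.sum_add_distrib]
    simp
  rw [hsumu ν inferInstance] at hnν
  have f3 : N * (1 - δ) ≤ N * ∑ j, ν.real (B j) := by gcongr
  linarith

theorem boxDistP_nonneg (ρ₁ ρ₂ : unitI → unitI → ℝ) : 0 ≤ boxDistP ρ₁ ρ₂ :=
  Real.sInf_nonneg fun _ h => h.1

theorem boxDistP_le {ρ₁ ρ₂ : unitI → unitI → ℝ} {ε : ℝ} (h0 : 0 ≤ ε) (I₀ : Set unitI)
    (hm : MeasurableSet I₀) (h1 : ENNReal.ofReal (1 - ε) ≤ lebI I₀)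
    (h2 : ∀ s ∈ I₀, ∀ t ∈ I₀, |ρ₁ s t - ρ₂ s t| ≤ ε) : boxDistP ρ₁ ρ₂ ≤ ε :=
  csInf_le ⟨0, fun _ h => h.1⟩ ⟨h0, I₀, hm, h1, h2⟩

theorem boxDistP_half (ρ₁ ρ₂ : unitI → unitI → ℝ) :
    boxDistP ρ₁ ρ₂ ≤
      2 * boxDistP (fun s t => 1 / 2 * ρ₁ s t) (fun s t => 1 / 2 * ρ₂ s t) := by
  have : boxDistP ρ₁ ρ₂ / 2 ≤
      boxDistP (fun s t => 1 / 2 * ρ₁ s t) (fun s t => 1 / 2 * ρ₂ s t) := by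
    refine le_csInf ⟨1, zero_le_one, ∅, .empty, by simp, by simp⟩ ?_
    rintro ε ⟨h0, I₀, hm, h1, h2⟩
    have : boxDistP ρ₁ ρ₂ ≤ 2 * ε := by
      refine boxDistP_le (by linarith) I₀ hm
        ((ENNReal.ofReal_le_ofReal (by linarith)).trans h1) fun s hs t ht => ?_
      have := h2 s hs t ht
      rw [← mul_sub, abs_mul, abs_of_pos (by norm_num : (0 : ℝ) < 1 / 2)] at this
      linarith
    linarith
  linarith

theorem boxDist_le {X : Type*} [MeasurableSpace X] (m : MetricSpace X) (μ ν : Measure X)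
    {φ ψ : unitI → X} (hφ : IsParameter φ μ) (hψ : IsParameter ψ ν) :
    boxDist m m μ ν ≤ boxDistP (fun s t => dist (φ s) (φ t)) (fun s t => dist (ψ s) (ψ t)) := by
  refine csInf_le ⟨0, ?_⟩ ⟨φ, ψ, hφ, hψ, rfl⟩
  rintro r ⟨_, _, _, _, rfl⟩
  exact boxDistP_nonneg _ _

/-- for Borel probability measures `μ`, `ν` on a complete separable
metric space `X`,
`(1/2) □((X,μ),(X,ν)) ≤ □((2⁻¹X,μ),(2⁻¹X,ν)) ≤ d_P(μ,ν)`,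
where `2⁻¹X` is `X` with its metric halved. -/
theorem box_halfBox_prohorov {X : Type*} [m : MetricSpace X] [CompleteSpace X]
    [TopologicalSpace.SeparableSpace X] [MeasurableSpace X] [BorelSpace X]
    (μ ν : Measure X) [IsProbabilityMeasure μ] [IsProbabilityMeasure ν] :
    (1 / 2 : ℝ) * boxDist m m μ ν ≤
        boxDist (scaleMetric m (1 / 2) (by norm_num)) (scaleMetric m (1 / 2) (by norm_num)) μ ν ∧
      boxDist (scaleMetric m (1 / 2) (by norm_num)) (scaleMetric m (1 / 2) (by norm_num)) μ ν ≤
        prohorovDist μ ν := by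
  constructor
  · have : PolishSpace X := inferInstance
    obtain ⟨φ₀, hφ₀⟩ := exists_parameter μ
    obtain ⟨ψ₀, hψ₀⟩ := exists_parameter ν
    refine le_csInf ⟨_, φ₀, ψ₀, hφ₀, hψ₀, rfl⟩ ?_
    rintro r ⟨φ, ψ, hφ, hψ, rfl⟩
    have h1 := boxDist_le m μ ν hφ hψ
    have h2 := boxDistP_half (fun s t => dist (φ s) (φ t)) (fun s t => dist (ψ s) (ψ t))
    have h3 := h1.trans h2
    change 1 / 2 * boxDist m m μ ν ≤
      boxDistP (fun s t => 1 / 2 * dist (φ s) (φ t)) (fun s t => 1 / 2 * dist (ψ s) (ψ t))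
    linarith
  · refine le_csInf ⟨1, one_pos, fun A _ => ?_⟩ ?_
    · rw [ENNReal.ofReal_one]
      exact prob_le_one.trans le_add_self
    rintro ε ⟨hε, h⟩
    refine le_of_forall_pos_le_add fun η hη => ?_
    obtain ⟨π, hf, hg, hπ⟩ := strassen_approx μ ν hε (δ := η / 3) (by positivity) h
    have : IsProbabilityMeasure π := by
      constructor
      rw [← measure_univ (μ := μ), ← hf, Measure.map_apply measurable_fst .univ, Set.preimage_univ]
    obtain ⟨f, hfm, hfπ⟩ := exists_parameter π
    have hφ : IsParameter (fun s => (f s).1) μ :=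
      ⟨measurable_fst.comp hfm, by rw [← hf, ← hfπ, Measure.map_map measurable_fst hfm]; rfl⟩
    have hψ : IsParameter (fun s => (f s).2) ν :=
      ⟨measurable_snd.comp hfm, by rw [← hg, ← hfπ, Measure.map_map measurable_snd hfm]; rfl⟩
    refine (boxDist_le _ μ ν hφ hψ).trans ?_
    have hD : MeasurableSet {z : X × X | dist z.1 z.2 ≤ ε + 2 * (η / 3)} :=
      measurableSet_le (measurable_fst.dist measurable_snd) measurable_const
    refine boxDistP_le (by linarith) (f ⁻¹' {z | dist z.1 z.2 ≤ ε + 2 * (η / 3)}) (hfm hD) ?_ ?_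
    · rw [← Measure.map_apply hfm hD, hfπ]
      refine le_trans (ENNReal.ofReal_le_ofReal (by linarith)) hπ
    · intro s hs t ht
      change |1 / 2 * dist (f s).1 (f t).1 - 1 / 2 * dist (f s).2 (f t).2| ≤ ε + η
      simp only [Set.mem_preimage, Set.mem_ofPred_eq] at hs ht
      have h1 := dist_triangle4 (f s).1 (f s).2 (f t).2 (f t).1
      have h2 := dist_triangle4 (f s).2 (f s).1 (f t).1 (f t).2
      rw [dist_comm (f t).2] at h1
      rw [dist_comm (f s).2 (f s).1] at h2
      rw [abs_le]
      constructor <;> linarith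
end
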